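/- arXiv:2604.18782 — 2 statements merged into one kernel-verified Lean document; each statement's English description precedes it below -/
import Mathlib

section
/- Let d ≥ 2, n ≥ 1 and g ≥ 0 be integers, and let e : Fin n → ℕ satisfy 2 ≤ e i ≤ d for all i and ∑ i, e i = 2(g - 1 + d) + n (the Riemann–Hurwitz condition). Then there exist permutations σ_1, …, σ_n of Fin d such that: each σ_i is a cycle of length e i (i.e. σ_i.IsCycle and σ_i.support.card = e i); the product σ_n * ⋯ * σ_1 equals the identity; and the subgroup of Equiv.Perm (Fin d) generated by {σ_1, …, σ_n} acts transitively on Fin d (for all a b : Fin d there exists τ in the generated subgroup with τ a = b). -/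
/-!
A cycle of length `a + 1` contributes its *index* `a` to the Riemann–Hurwitz formula, which says
that the indices add up to an even number that is at least `2 (d - 1)`.

Three indices `a, b, c ≤ d - 1` with this property are realised by induction on `d`. If
`a = b = c = d - 1`, then `d` is odd, and `σ * σ * σ⁻²` works for a `d`-cycle `σ`. Otherwise, say,
`c < d - 1`: remove a point `x`, realise `(a - 1, b - 1, c)` by `σ * τ * ρ = 1` on the rest, and
insert `x` next to a point `y` moved by both `σ` and `τ`, as in
`(σ * swap y x) * (swap x y * τ) * ρ = 1`.

For a list `a :: b :: L` of indices, there are two cases. If `L.sum ≤ d - 1`, realise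
`(a, b, L.sum)` and cut the third cycle into consecutive cycles of the indices in `L`. Otherwise
merge `a` and `b` into a single index `c`, namely `a + b` if that is at most `d - 1`, and else the
one of `d - 1` and `d - 2` that has the right parity. If `c = a + b`, a cycle of index `c` is cut
into cycles of index `a` and `b`; otherwise it is a product of two such cycles by the result for
three indices.
-/

namespace Hurwitz

open Equiv Equiv.Perm List

variable {α : Type*}

lemma exists_isRotated_cons {l : List α} {y : α} (hy : y ∈ l) : ∃ l', l ~r y :: l' := by
  obtain ⟨u, v, rfl⟩ := append_of_mem hy
  exact ⟨v ++ u, isRotated_append⟩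

lemma isPretransitive_closure_of_subset {s t : Set (Perm α)} (hst : s ⊆ Subgroup.closure t)
    (hs : MulAction.IsPretransitive (Subgroup.closure s) α) :
    MulAction.IsPretransitive (Subgroup.closure t) α := by
  refine ⟨fun x y => ?_⟩
  obtain ⟨τ, hτ⟩ := hs.exists_smul_eq x y
  exact ⟨Subgroup.inclusion ((Subgroup.closure_le _).2 hst) τ, hτ⟩

variable [DecidableEq α]

lemma formPerm_append_cons (l : List α) (y : α) (l' : List α) :
    formPerm (l ++ y :: l') = formPerm (l ++ [y]) * formPerm (y :: l') := by
  induction l with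
  | nil => simp only [nil_append, formPerm_singleton, one_mul]
  | cons x l ih =>
    cases l with
    | nil => simp only [cons_append, nil_append, formPerm_cons_cons, formPerm_singleton, mul_one]
    | cons z l =>
      simp only [cons_append, formPerm_cons_cons] at ih ⊢
      rw [ih, mul_assoc]

lemma formPerm_map {β : Type*} [DecidableEq β] (g : α ≃ β) (l : List α) :
    formPerm (l.map g) = g.permCongr (formPerm l) := by
  induction l with
  | nil => exact (permCongr_refl _).symm
  | cons x l ih =>
    cases l with
    | nil => exact (permCongr_refl _).symm
    | cons y l =>
      rw [map_cons, map_cons, formPerm_cons_cons, formPerm_cons_cons, permCongr_mul, ← ih, map_cons,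
        ← symm_trans_swap_trans]
      rfl

lemma exists_formPerm_pow_apply_eq {l : List α} (hl : l.Nodup) {x y : α} (hx : x ∈ l)
    (hy : y ∈ l) : ∃ k : ℕ, (formPerm l ^ k) x = y := by
  obtain ⟨i, hi, rfl⟩ := getElem_of_mem hx
  obtain ⟨j, hj, rfl⟩ := getElem_of_mem hy
  refine ⟨j + (l.length - i), ?_⟩
  have hmod : (i + (j + (l.length - i))) % l.length = j := by
    rw [show i + (j + (l.length - i)) = j + l.length by omega, Nat.add_mod_right,
      Nat.mod_eq_of_lt hj]
  simp only [formPerm_pow_apply_getElem _ hl, hmod]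

lemma exists_formPerm_eq_pow [Finite α] {l : List α} (hl : l.Nodup) {k : ℕ}
    (hk : k.Coprime l.length) :
    ∃ l' : List α, l'.Nodup ∧ l' ~ l ∧ formPerm l' = formPerm l ^ k := by
  cases nonempty_fintype α
  rcases Nat.lt_or_ge l.length 2 with hlen | hlen
  · refine ⟨l, hl, .refl l, ?_⟩
    rw [(formPerm_eq_one_iff _ hl).2 (by omega), one_pow]
  have hcycle : (formPerm l).IsCycle := isCycle_formPerm hl hlen
  have hsupp : (formPerm l).support = l.toFinset :=
    support_formPerm_of_nodup l hl (by rintro x rfl; simp at hlen)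
  have hcop : k.Coprime (orderOf (formPerm l)) := by
    rwa [hcycle.orderOf, hsupp, toFinset_card_of_nodup hl]
  have hpow : (formPerm l ^ k).IsCycle := hcycle.pow_iff.2 hcop
  have hmem : ∀ y, y ∈ (formPerm l ^ k).support ↔ y ∈ l := fun y => by
    rw [support_pow_coprime hcop, hsupp, mem_toFinset]
  obtain ⟨x, hx⟩ := exists_mem_of_length_pos (l := l) (by omega)
  refine ⟨toList (formPerm l ^ k) x, nodup_toList _ _,
    (perm_ext_iff_of_nodup (nodup_toList _ _) hl).2 fun y => ?_, ?_⟩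
  · rw [mem_toList_iff, ← hmem y]
    refine ⟨fun ⟨hxy, hx⟩ => hxy.mem_support_iff.1 hx, fun hy => ⟨?_, (hmem x).2 hx⟩⟩
    exact hpow.sameCycle (mem_support.1 ((hmem x).2 hx)) (mem_support.1 hy)
  · rw [formPerm_toList, hpow.cycleOf_eq (mem_support.1 ((hmem x).2 hx))]

lemma isPretransitive_closure_formPerm {𝓛 : Set (List α)} (hnodup : ∀ l ∈ 𝓛, l.Nodup)
    (hcover : ∀ x, ∃ l ∈ 𝓛, x ∈ l) (hmeet : ∀ l ∈ 𝓛, ∀ l' ∈ 𝓛, ∃ z ∈ l, z ∈ l') :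
    MulAction.IsPretransitive (Subgroup.closure (formPerm '' 𝓛)) α := by
  have hmem : ∀ l ∈ 𝓛, ∀ x ∈ l, ∀ y ∈ l,
      ∃ τ : Subgroup.closure (formPerm '' 𝓛), τ • x = y := by
    intro l hl x hx y hy
    obtain ⟨k, hk⟩ := exists_formPerm_pow_apply_eq (hnodup l hl) hx hy
    exact ⟨⟨_, pow_mem (Subgroup.subset_closure (Set.mem_image_of_mem _ hl)) k⟩, hk⟩
  refine ⟨fun x y => ?_⟩
  obtain ⟨l, hl, hx⟩ := hcover x
  obtain ⟨l', hl', hy⟩ := hcover y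
  obtain ⟨z, hz, hz'⟩ := hmeet l hl l' hl'
  obtain ⟨τ, rfl⟩ := hmem l hl x hx z hz
  obtain ⟨τ', rfl⟩ := hmem l' hl' _ hz' y hy
  exact ⟨τ' * τ, mul_smul τ' τ x⟩

/-- `σ` is a cycle of length `a + 1`, a cycle of length one being the identity. The index `a` is
the contribution of `σ` to the Riemann–Hurwitz formula. -/
def IsCycleOfIndex (σ : Perm α) (a : ℕ) : Prop :=
  ∃ l : List α, l.Nodup ∧ l.length = a + 1 ∧ formPerm l = σ

namespace IsCycleOfIndex

variable {σ τ π : Perm α} {a b : ℕ}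

lemma one [Nonempty α] : IsCycleOfIndex (1 : Perm α) 0 :=
  ⟨[Classical.arbitrary α], nodup_singleton _, rfl, formPerm_singleton _⟩

lemma eq_one (h : IsCycleOfIndex σ 0) : σ = 1 := by
  obtain ⟨l, hl, hlen, rfl⟩ := h
  exact (formPerm_eq_one_iff _ hl).2 hlen.le

lemma isCycle (h : IsCycleOfIndex σ a) (ha : a ≠ 0) : σ.IsCycle := by
  obtain ⟨l, hl, hlen, rfl⟩ := h
  exact isCycle_formPerm hl (by omega)

lemma card_support [Fintype α] (h : IsCycleOfIndex σ a) (ha : a ≠ 0) :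
    σ.support.card = a + 1 := by
  obtain ⟨l, hl, hlen, rfl⟩ := h
  have hne : ∀ x, l ≠ [x] := by
    rintro x rfl
    exact ha (by simpa using hlen.symm)
  rw [support_formPerm_of_nodup l hl hne, toFinset_card_of_nodup hl, hlen]

lemma inv (h : IsCycleOfIndex σ a) : IsCycleOfIndex σ⁻¹ a := by
  obtain ⟨l, hl, hlen, rfl⟩ := h
  exact ⟨l.reverse, nodup_reverse.2 hl, by rw [length_reverse, hlen], formPerm_reverse l⟩

lemma conj (h : IsCycleOfIndex σ a) (g : Perm α) : IsCycleOfIndex (g * σ * g⁻¹) a := by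
  obtain ⟨l, hl, hlen, rfl⟩ := h
  exact ⟨l.map g, hl.map g.injective, by rw [length_map, hlen], formPerm_map g l⟩

lemma isConj [Finite α] (hσ : IsCycleOfIndex σ a) (hτ : IsCycleOfIndex τ a) : IsConj σ τ := by
  cases nonempty_fintype α
  rcases eq_or_ne a 0 with rfl | ha
  · rw [hσ.eq_one, hτ.eq_one]
  · exact (hσ.isCycle ha).isConj (hτ.isCycle ha)
      ((hσ.card_support ha).trans (hτ.card_support ha).symm)

lemma exists_mul_eq (h : IsCycleOfIndex π (a + b)) :
    ∃ σ τ : Perm α, IsCycleOfIndex σ a ∧ IsCycleOfIndex τ b ∧ σ * τ = π := by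
  obtain ⟨l, hl, hlen, rfl⟩ := h
  have ha : a < l.length := by omega
  have htake : l.take a ++ [l[a]] = l.take (a + 1) := take_concat_get' l a ha
  have hdrop : l[a] :: l.drop (a + 1) = l.drop a := getElem_cons_drop ha
  refine ⟨formPerm (l.take (a + 1)), formPerm (l.drop a),
    ⟨_, hl.take, ?_, rfl⟩, ⟨_, hl.drop, ?_, rfl⟩, ?_⟩
  · rw [length_take]
    omega
  · rw [length_drop]
    omega
  · rw [← htake, ← hdrop, ← formPerm_append_cons, hdrop, take_append_drop]

lemma exists_prod_eq {L : List ℕ} (h : IsCycleOfIndex π L.sum) :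
    ∃ P : List (Perm α), Forall₂ IsCycleOfIndex P L ∧ P.prod = π := by
  induction L generalizing π with
  | nil => exact ⟨[], .nil, h.eq_one.symm⟩
  | cons a L ih =>
    obtain ⟨σ, τ, hσ, hτ, rfl⟩ := exists_mul_eq (by rwa [sum_cons] at h)
    obtain ⟨P, hP, rfl⟩ := ih hτ
    exact ⟨σ :: P, .cons hσ hP, prod_cons⟩

end IsCycleOfIndex

/-- Three cycles of indices `a`, `b`, `c`, written as lists of points, whose product is the
identity and which together involve exactly the points of `S`. -/
structure IsCycleTriple (S : Finset α) (a b c : ℕ) (l₁ l₂ l₃ : List α) : Prop where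
  nodup₁ : l₁.Nodup
  nodup₂ : l₂.Nodup
  nodup₃ : l₃.Nodup
  length₁ : l₁.length = a + 1
  length₂ : l₂.length = b + 1
  length₃ : l₃.length = c + 1
  mem_iff : ∀ x, x ∈ S ↔ x ∈ l₁ ∨ x ∈ l₂ ∨ x ∈ l₃
  prod_eq_one : formPerm l₁ * formPerm l₂ * formPerm l₃ = 1

namespace IsCycleTriple

variable {S : Finset α} {a b c : ℕ} {l₁ l₂ l₃ : List α}

lemma rotate (h : IsCycleTriple S a b c l₁ l₂ l₃) : IsCycleTriple S b c a l₂ l₃ l₁ where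
  nodup₁ := h.nodup₂
  nodup₂ := h.nodup₃
  nodup₃ := h.nodup₁
  length₁ := h.length₂
  length₂ := h.length₃
  length₃ := h.length₁
  mem_iff x := by rw [h.mem_iff, or_comm, or_assoc]
  prod_eq_one := by
    have hprod := h.prod_eq_one
    rw [mul_assoc] at hprod
    exact mul_eq_one_iff_eq_inv.2 (eq_inv_of_mul_eq_one_right hprod)

lemma exists_mem_mem (h : IsCycleTriple S a b c l₁ l₂ l₃) (hS : S.card < a + b + 2) :
    ∃ y ∈ l₁, y ∈ l₂ := by
  have hcard : S.card < l₁.toFinset.card + l₂.toFinset.card := by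
    rw [toFinset_card_of_nodup h.nodup₁, toFinset_card_of_nodup h.nodup₂, h.length₁, h.length₂]
    omega
  obtain ⟨y, hy⟩ := Finset.inter_nonempty_of_card_lt_card_add_card
    (fun x hx => (h.mem_iff x).2 (.inl (mem_toFinset.1 hx)))
    (fun x hx => (h.mem_iff x).2 (.inr (.inl (mem_toFinset.1 hx)))) hcard
  simp only [Finset.mem_inter, mem_toFinset] at hy
  exact ⟨y, hy⟩

lemma exists_insert (h : IsCycleTriple S a b c l₁ l₂ l₃) (hS : S.card < a + b + 2) {x : α}
    (hx : x ∉ S) : ∃ l₁' l₂', IsCycleTriple (insert x S) (a + 1) (b + 1) c l₁' l₂' l₃ := by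
  obtain ⟨y, hy₁, hy₂⟩ := h.exists_mem_mem hS
  obtain ⟨u, hu⟩ : ∃ u, l₁ ~r u ++ [y] := by
    obtain ⟨u, hu⟩ := exists_isRotated_cons hy₁
    exact ⟨u, hu.trans (isRotated_append (l := [y]))⟩
  obtain ⟨v, hv⟩ := exists_isRotated_cons hy₂
  have hx₁ : x ∉ u ++ [y] := fun hxu => hx ((h.mem_iff x).2 (.inl (hu.mem_iff.2 hxu)))
  have hx₂ : x ∉ y :: v := fun hxv => hx ((h.mem_iff x).2 (.inr (.inl (hv.mem_iff.2 hxv))))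
  refine ⟨u ++ [y, x], x :: y :: v, ?_, (hv.nodup_iff.1 h.nodup₂).cons hx₂, h.nodup₃, ?_, ?_,
    h.length₃, fun z => ?_, ?_⟩
  · rw [append_cons, ← concat_eq_append]
    exact (hu.nodup_iff.1 h.nodup₁).concat hx₁
  · have := hu.perm.length_eq.symm.trans h.length₁
    simp only [length_append, length_cons, length_nil] at this ⊢
    omega
  · rw [length_cons, ← hv.perm.length_eq, h.length₂]
  · rw [Finset.mem_insert, h.mem_iff, hu.mem_iff, hv.mem_iff]
    simp only [mem_append, mem_cons, not_mem_nil, or_false]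
    tauto
  · rw [formPerm_append_pair, formPerm_cons_cons, swap_comm y x, ← h.prod_eq_one,
      formPerm_eq_of_isRotated h.nodup₁ hu, formPerm_eq_of_isRotated h.nodup₂ hv,
      mul_assoc (formPerm (u ++ [y])), swap_mul_self_mul]

lemma isPretransitive [Fintype α] (h : IsCycleTriple Finset.univ a b c l₁ l₂ l₃)
    (hab : Fintype.card α < a + b + 2) (hbc : Fintype.card α < b + c + 2)
    (hca : Fintype.card α < c + a + 2) :
    MulAction.IsPretransitive
      (Subgroup.closure {formPerm l₁, formPerm l₂, formPerm l₃}) α := by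
  obtain ⟨y₁₂, h₁₂⟩ := h.exists_mem_mem hab
  obtain ⟨y₂₃, h₂₃⟩ := h.rotate.exists_mem_mem hbc
  obtain ⟨y₃₁, h₃₁⟩ := h.rotate.rotate.exists_mem_mem hca
  have himage : {formPerm l₁, formPerm l₂, formPerm l₃} = formPerm '' {l₁, l₂, l₃} := by
    simp only [Set.image_insert_eq, Set.image_singleton]
  rw [himage]
  refine isPretransitive_closure_formPerm ?_ (fun x => ?_) ?_
  · rintro l (rfl | rfl | rfl)
    exacts [h.nodup₁, h.nodup₂, h.nodup₃]
  · simpa using (h.mem_iff x).1 (Finset.mem_univ x)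
  · rintro l (rfl | rfl | rfl) l' (rfl | rfl | rfl)
    exacts [⟨y₁₂, h₁₂.1, h₁₂.1⟩, ⟨y₁₂, h₁₂⟩, ⟨y₃₁, h₃₁.symm⟩, ⟨y₁₂, h₁₂.symm⟩,
      ⟨y₁₂, h₁₂.2, h₁₂.2⟩, ⟨y₂₃, h₂₃⟩, ⟨y₃₁, h₃₁⟩, ⟨y₂₃, h₂₃.symm⟩, ⟨y₂₃, h₂₃.2, h₂₃.2⟩]

end IsCycleTriple

lemma exists_isCycleTriple_self [Finite α] {m : ℕ} {S : Finset α} (hS : S.card = m + 1)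
    (hm : Even m) : ∃ l₁ l₂ l₃, IsCycleTriple S m m m l₁ l₂ l₃ := by
  have hlen : S.toList.length = m + 1 := by rw [Finset.length_toList, hS]
  obtain ⟨l, hl, hperm, hsq⟩ := exists_formPerm_eq_pow (k := 2) S.nodup_toList
    (hlen ▸ Nat.coprime_two_left.2 hm.add_one)
  refine ⟨S.toList, S.toList, l.reverse, S.nodup_toList, S.nodup_toList, nodup_reverse.2 hl, hlen,
    hlen, ?_, fun x => ?_, ?_⟩
  · rw [length_reverse, hperm.length_eq, hlen]
  · rw [mem_reverse, hperm.mem_iff, Finset.mem_toList, or_self, or_self]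
  · rw [formPerm_reverse, hsq, ← sq, mul_inv_cancel]

lemma exists_isCycleTriple [Finite α] {m a b c : ℕ} {S : Finset α} (hS : S.card = m + 1)
    (ha : a ≤ m) (hb : b ≤ m) (hc : c ≤ m) (heven : Even (a + b + c))
    (hsum : 2 * m ≤ a + b + c) : ∃ l₁ l₂ l₃, IsCycleTriple S a b c l₁ l₂ l₃ := by
  induction m generalizing S a b c with
  | zero =>
    obtain ⟨rfl, rfl, rfl⟩ : a = 0 ∧ b = 0 ∧ c = 0 := by omega
    exact exists_isCycleTriple_self hS .zero
  | succ m ih =>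
    have of_lt : ∀ {a b c}, a ≤ m + 1 → b ≤ m + 1 → c < m + 1 → Even (a + b + c) →
        2 * (m + 1) ≤ a + b + c → ∃ l₁ l₂ l₃, IsCycleTriple S a b c l₁ l₂ l₃ := by
      intro a b c ha hb hc heven hsum
      obtain ⟨a, rfl⟩ : ∃ k, a = k + 1 := ⟨a - 1, by omega⟩
      obtain ⟨b, rfl⟩ : ∃ k, b = k + 1 := ⟨b - 1, by omega⟩
      obtain ⟨x, S, hx, rfl, hS'⟩ := Finset.card_eq_succ.1 hS
      obtain ⟨l₁, l₂, l₃, h⟩ := ih hS' (a := a) (b := b) (c := c) (by omega) (by omega)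
        (by omega) (by grind) (by omega)
      obtain ⟨l₁', l₂', h'⟩ := h.exists_insert (by omega) hx
      exact ⟨l₁', l₂', l₃, h'⟩
    by_cases hc' : c < m + 1
    · exact of_lt ha hb hc' heven hsum
    by_cases hb' : b < m + 1
    · obtain ⟨l₁, l₂, l₃, h⟩ := of_lt hc ha hb' (by grind) (by omega)
      exact ⟨l₂, l₃, l₁, h.rotate⟩
    by_cases ha' : a < m + 1
    · obtain ⟨l₁, l₂, l₃, h⟩ := of_lt hb hc ha' (by grind) (by omega)
      exact ⟨l₃, l₁, l₂, h.rotate.rotate⟩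
    obtain ⟨rfl, rfl, rfl⟩ : a = m + 1 ∧ b = m + 1 ∧ c = m + 1 := by omega
    exact exists_isCycleTriple_self hS (by grind)

lemma exists_transitive_triple [Fintype α] {m a b c : ℕ} (hα : Fintype.card α = m + 1)
    (ha : a ≤ m) (hb : b ≤ m) (hc : c ≤ m) (heven : Even (a + b + c))
    (hsum : 2 * m ≤ a + b + c) :
    ∃ σ τ ρ : Perm α, IsCycleOfIndex σ a ∧ IsCycleOfIndex τ b ∧ IsCycleOfIndex ρ c ∧
      σ * τ * ρ = 1 ∧ MulAction.IsPretransitive (Subgroup.closure {σ, τ, ρ}) α := by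
  obtain ⟨l₁, l₂, l₃, h⟩ := exists_isCycleTriple (Finset.card_univ.trans hα) ha hb hc heven hsum
  exact ⟨_, _, _, ⟨l₁, h.nodup₁, h.length₁, rfl⟩, ⟨l₂, h.nodup₂, h.length₂, rfl⟩,
    ⟨l₃, h.nodup₃, h.length₃, rfl⟩, h.prod_eq_one,
    h.isPretransitive (by omega) (by omega) (by omega)⟩

lemma IsCycleOfIndex.exists_mul_eq_of_two_mul_le [Fintype α] {m a b c : ℕ}
    (hα : Fintype.card α = m + 1) (ha : a ≤ m) (hb : b ≤ m) (hc : c ≤ m)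
    (heven : Even (a + b + c)) (hsum : 2 * m ≤ a + b + c) {π : Perm α}
    (hπ : IsCycleOfIndex π c) :
    ∃ σ τ : Perm α, IsCycleOfIndex σ a ∧ IsCycleOfIndex τ b ∧ σ * τ = π := by
  obtain ⟨σ, τ, ρ, hσ, hτ, hρ, hprod, -⟩ := exists_transitive_triple hα ha hb hc heven hsum
  obtain ⟨g, hg⟩ := isConj_iff.1 (hρ.inv.isConj hπ)
  refine ⟨g * σ * g⁻¹, g * τ * g⁻¹, hσ.conj g, hτ.conj g, ?_⟩
  rw [← hg, ← eq_inv_of_mul_eq_one_left hprod, conj_mul]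

variable (α) in
/-- The list `L` of cycle indices is realised by a tuple of permutations of `α` with product `1`
that generates a transitive group, that is, by a connected branched cover of `ℙ¹`. -/
def Realizable (L : List ℕ) : Prop :=
  ∃ P : List (Perm α), Forall₂ IsCycleOfIndex P L ∧ P.prod = 1 ∧
    MulAction.IsPretransitive (Subgroup.closure {σ | σ ∈ P}) α

namespace Realizable

lemma cons_cons {a b c : ℕ} {L : List ℕ} (h : Realizable α (c :: L))
    (hfactor : ∀ π : Perm α, IsCycleOfIndex π c →
      ∃ σ τ : Perm α, IsCycleOfIndex σ a ∧ IsCycleOfIndex τ b ∧ σ * τ = π) :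
    Realizable α (a :: b :: L) := by
  obtain ⟨_, hπP, hprod, htrans⟩ := h
  obtain ⟨π, P, hπ, hP, rfl⟩ := forall₂_cons_right_iff.1 hπP
  obtain ⟨σ, τ, hσ, hτ, rfl⟩ := hfactor π hπ
  refine ⟨σ :: τ :: P, .cons hσ (.cons hτ hP), ?_, isPretransitive_closure_of_subset ?_ htrans⟩
  · rw [prod_cons, prod_cons, ← mul_assoc, ← prod_cons, hprod]
  · intro ρ hρ
    rcases mem_cons.1 hρ with rfl | hρ
    · exact mul_mem (Subgroup.subset_closure mem_cons_self)
        (Subgroup.subset_closure (mem_cons_of_mem _ mem_cons_self))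
    · exact Subgroup.subset_closure (mem_cons_of_mem _ (mem_cons_of_mem _ hρ))

lemma of_sum_le [Fintype α] {m a b : ℕ} {L : List ℕ} (hα : Fintype.card α = m + 1)
    (ha : a ≤ m) (hb : b ≤ m) (hL : L.sum ≤ m) (heven : Even (a + b + L.sum))
    (hsum : 2 * m ≤ a + b + L.sum) : Realizable α (a :: b :: L) := by
  obtain ⟨σ, τ, ρ, hσ, hτ, hρ, hprod, htrans⟩ :=
    exists_transitive_triple hα ha hb hL heven hsum
  obtain ⟨P, hP, rfl⟩ := hρ.exists_prod_eq
  refine ⟨σ :: τ :: P, .cons hσ (.cons hτ hP), ?_, isPretransitive_closure_of_subset ?_ htrans⟩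
  · rw [prod_cons, prod_cons, ← mul_assoc, hprod]
  · rintro _ (rfl | rfl | rfl)
    · exact Subgroup.subset_closure mem_cons_self
    · exact Subgroup.subset_closure (mem_cons_of_mem _ mem_cons_self)
    · exact list_prod_mem fun π hπ =>
        Subgroup.subset_closure (mem_cons_of_mem _ (mem_cons_of_mem _ hπ))

lemma cons_of_even_of_two_mul_le [Fintype α] {m a : ℕ} {L : List ℕ} (hα : Fintype.card α = m + 1)
    (ha : a ≤ m) (hL : ∀ b ∈ L, b ≤ m) (heven : Even (a + L.sum)) (hsum : 2 * m ≤ a + L.sum) :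
    Realizable α (a :: L) := by
  induction L generalizing a with
  | nil =>
    rw [sum_nil] at hsum
    obtain ⟨rfl, rfl⟩ : m = 0 ∧ a = 0 := by omega
    have : Unique α := Classical.choice (Fintype.card_eq_one_iff_nonempty_unique.1 hα)
    exact ⟨[1], .cons .one .nil, prod_singleton, inferInstance⟩
  | cons b L ih =>
    rw [sum_cons, ← add_assoc] at heven hsum
    obtain ⟨hb, hL⟩ := forall_mem_cons.1 hL
    rcases le_or_gt L.sum m with hLm | hLm
    · exact of_sum_le hα ha hb hLm heven hsum
    rcases le_or_gt (a + b) m with hab | hab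
    · exact (ih hab hL heven hsum).cons_cons fun π hπ => hπ.exists_mul_eq
    obtain ⟨c, hcm, hmc, hc⟩ : ∃ c ≤ m, m ≤ c + 1 ∧ Even (a + b + c) := by
      rcases Nat.even_or_odd (a + b + m) with h | h
      · exact ⟨m, le_rfl, by omega, h⟩
      · exact ⟨m - 1, by omega, by omega, by grind⟩
    exact (ih hcm hL (by grind) (by omega)).cons_cons fun π hπ =>
      hπ.exists_mul_eq_of_two_mul_le hα ha hb hcm hc (by omega)

lemma of_even_of_two_mul_le [Fintype α] {m : ℕ} {L : List ℕ} (hα : Fintype.card α = m + 1)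
    (hL : ∀ a ∈ L, a ≤ m) (heven : Even L.sum) (hsum : 2 * m ≤ L.sum) : Realizable α L := by
  cases L with
  | nil =>
    rw [sum_nil] at hsum
    have : Subsingleton α := Fintype.card_le_one_iff_subsingleton.1 (by omega)
    exact ⟨[], .nil, prod_nil, inferInstance⟩
  | cons a L =>
    obtain ⟨ha, hL⟩ := forall_mem_cons.1 hL
    rw [sum_cons] at heven hsum
    exact cons_of_even_of_two_mul_le hα ha hL heven hsum

lemma exists_fin {n : ℕ} {f : Fin n → ℕ} (h : Realizable α (ofFn f).reverse) :
    ∃ σ : Fin n → Perm α, (∀ i, IsCycleOfIndex (σ i) (f i)) ∧ (ofFn σ).reverse.prod = 1 ∧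
      MulAction.IsPretransitive (Subgroup.closure (Set.range σ)) α := by
  obtain ⟨P, hP, hprod, htrans⟩ := h
  have hP' : Forall₂ IsCycleOfIndex P.reverse (ofFn f) := by
    rwa [← forall₂_reverse_iff, reverse_reverse]
  obtain ⟨σ, hσ⟩ : ∃ σ : Fin n → Perm α, ofFn σ = P.reverse := by
    obtain rfl : P.reverse.length = n := hP'.length_eq.trans length_ofFn
    exact ⟨_, ofFn_get _⟩
  rw [← hσ] at hP'
  have hrange : Set.range σ = {π | π ∈ P} := by
    ext π
    rw [Set.mem_ofPred_eq, ← mem_reverse, ← hσ, mem_ofFn', Set.mem_range]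
  refine ⟨σ, fun i => ?_, by rw [hσ, reverse_reverse, hprod], hrange ▸ htrans⟩
  simpa using (forall₂_iff_get.1 hP').2 i (by simp) (by simp)

end Realizable

lemma sum_index_eq {d n g : ℕ} (hd : 1 ≤ d) {e : Fin n → ℕ} (he : ∀ i, 1 ≤ e i)
    (hRH : (∑ i, (e i : ℤ)) = 2 * ((g : ℤ) - 1 + d) + n) :
    ∑ i, (e i - 1) = 2 * (d - 1) + 2 * g := by
  have hsum : ∑ i, e i = ∑ i, (e i - 1) + n :=
    calc ∑ i, e i = ∑ i, (e i - 1 + 1) :=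
          Finset.sum_congr rfl fun i _ => (Nat.sub_add_cancel (he i)).symm
      _ = ∑ i, (e i - 1) + n := by
          rw [Finset.sum_add_distrib, Fin.sum_const, smul_eq_mul, mul_one]
  rw [← Nat.cast_sum] at hRH
  omega

end Hurwitz

/-- **Theorem 1 (main existence theorem).** Let `d ≥ 2`, `n ≥ 1`, `g ≥ 0` be integers and
`e : Fin n → ℕ` with `2 ≤ e i ≤ d` for all `i` and `∑ i, e i = 2(g - 1 + d) + n`
(the Riemann–Hurwitz condition). Then there exist permutations `σ 0, …, σ (n-1)` of `Fin d`
such that each `σ i` is a cycle of length `e i`, the product `σ (n-1) * ⋯ * σ 0` is the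
identity, and the subgroup generated by the `σ i` acts transitively on `Fin d`. -/
theorem hurwitz_existence (d n g : ℕ) (hd : 2 ≤ d) (hn : 1 ≤ n)
    (e : Fin n → ℕ) (he : ∀ i, 2 ≤ e i ∧ e i ≤ d)
    (hRH : (∑ i, (e i : ℤ)) = 2 * ((g : ℤ) - 1 + d) + n) :
    ∃ σ : Fin n → Equiv.Perm (Fin d),
      (∀ i, (σ i).IsCycle ∧ (σ i).support.card = e i) ∧
      ((List.ofFn σ).reverse).prod = 1 ∧
      (∀ a b : Fin d, ∃ τ ∈ Subgroup.closure (Set.range σ), τ a = b) := by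
  have hle : ∀ a ∈ (List.ofFn fun i => e i - 1).reverse, a ≤ d - 1 := by
    simp only [List.mem_reverse, List.forall_mem_ofFn_iff]
    exact fun i => Nat.sub_le_sub_right (he i).2 1
  have hsum : (List.ofFn fun i => e i - 1).reverse.sum = 2 * (d - 1) + 2 * g := by
    rw [List.sum_reverse, List.sum_ofFn]
    exact Hurwitz.sum_index_eq (by omega) (fun i => one_le_two.trans (he i).1) hRH
  have hcard : Fintype.card (Fin d) = d - 1 + 1 := by
    rw [Fintype.card_fin]
    omega
  obtain ⟨σ, hσ, hprod, htrans⟩ := (Hurwitz.Realizable.of_even_of_two_mul_le hcard hle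
    (by grind) (by omega)).exists_fin
  have hindex : ∀ i, e i - 1 ≠ 0 ∧ e i - 1 + 1 = e i := fun i => by
    have := (he i).1
    omega
  refine ⟨σ, fun i => ⟨(hσ i).isCycle (hindex i).1, ?_⟩, hprod, fun a b => ?_⟩
  · rw [(hσ i).card_support (hindex i).1, (hindex i).2]
  · obtain ⟨τ, hτ⟩ := htrans.exists_smul_eq a b
    exact ⟨τ, τ.2, hτ⟩
end

section
/- Let d ≥ 2 and n ≥ 2 be integers and let e : Fin n → ℕ be a (d,n)-admissible tuple, i.e. 2 ≤ e i ≤ d for all i, (∑ i, e i) - n is even, and (∑ i, e i) - n ≥ 2(d - 1). Then there exist permutations σ_1, …, σ_n of Fin d such that: each σ_i is a cycle of length e i; σ_n * ⋯ * σ_1 = 1; the subgroup generated by {σ_1, …, σ_n} acts transitively on Fin d; and for every i ∈ {1, …, n-1} the cycles σ_i and σ_{i+1} are not disjoint (their supports have nonempty intersection). -/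
/-!
Fix a point `x`. The cycle `(x y₁ … yₖ)` is the product `(x yₖ) ⋯ (x y₁)` of transpositions in the
star centred at `x`, so concatenating lists of entries multiplies the cycles in reverse order.

Let `u, m, v, w` be lists of distinct entries, with `m` of even length. The cycle of `m` then has
odd order, so its square is the cycle of a rearrangement `r` of `m`, and the cycle of `u r w`
followed by that of `wᴿ mᴿ v` is the cycle of `u m v`. Varying the four lengths, a given cycle
factors into two cycles through `x` of any lengths allowed by parity and the Riemann–Hurwitz
inequality. Splitting factors off the trivial cycle at `x` one at a time yields the whole tuple; all
its cycles move `x`, which makes them pairwise non-disjoint and the group they generate transitive.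
-/

open Equiv

lemma exists_perm_getElem_mul_mod {α : Type*} {n : ℕ} (x : α) (l : List α)
    (hn : n.Coprime (l.length + 1)) :
    ∃ r : List α, r.Perm l ∧ ∀ (i : ℕ) (hi : i < (x :: r).length),
      (x :: r)[i] = (x :: l)[n * i % (l.length + 1)]'(Nat.mod_lt _ l.length.succ_pos) := by
  let stride (i : Fin (l.length + 1)) : Fin (l.length + 1) :=
    ⟨n * i % (l.length + 1), Nat.mod_lt _ l.length.succ_pos⟩
  have hstride : Function.Injective stride := fun i j hij ↦
    Fin.ext <| (Nat.ModEq.cancel_left_of_coprime hn.symm (Fin.mk.inj hij)).eq_of_lt_of_lt i.2 j.2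
  let σ : Perm (Fin (l.length + 1)) :=
    Equiv.ofBijective stride (Finite.injective_iff_bijective.1 hstride)
  let r := List.ofFn fun i : Fin l.length ↦ (x :: l).get (σ i.succ)
  have hr : x :: r = List.ofFn ((x :: l).get ∘ σ) := by
    simp [List.ofFn_succ, r, σ, stride]
  refine ⟨r, (List.perm_cons x).1 ?_, fun i hi ↦ ?_⟩
  · rw [hr]
    exact (σ.ofFn_comp_perm _).trans (.of_eq (List.ofFn_get (x :: l)))
  · simp [hr, -List.ofFn_succ, σ, stride]

lemma exists_append_append_of_add_le_length {α : Type*} {l : List α} {i j : ℕ}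
    (h : i + j ≤ l.length) : ∃ u m v, l = u ++ m ++ v ∧ u.length = i ∧ v.length = j :=
  ⟨l.take i, (l.drop i).take (l.length - i - j), (l.drop i).drop (l.length - i - j),
    by simp only [List.append_assoc, List.take_append_drop],
    by grind, by grind⟩

lemma exists_nodup_append_toFinset_eq {α : Type*} [DecidableEq α] {l : List α} {S : Finset α}
    (hl : l.Nodup) (hlS : l.toFinset ⊆ S) :
    ∃ w : List α, (l ++ w).Nodup ∧ (l ++ w).toFinset = S := by
  refine ⟨(S \ l.toFinset).toList, hl.append (Finset.nodup_toList _) fun y hy hyw ↦ ?_, ?_⟩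
  · simp_all
  · simpa using hlS

section StarPerm

variable {α : Type*} [DecidableEq α] {x : α} {l m : List α}

/-- The product `(x yₖ) ⋯ (x y₁)` of star transpositions attached to `l = [y₁, …, yₖ]`, which is
the cycle `(x y₁ … yₖ)` when `x, y₁, …, yₖ` are distinct. The empty list is allowed and stands for
the trivial cycle at `x`. -/
def starPerm (x : α) (l : List α) : Perm α :=
  (l.map (swap x)).reverse.prod

lemma starPerm_nil : starPerm x [] = 1 := rfl

lemma starPerm_cons (y : α) (l : List α) : starPerm x (y :: l) = starPerm x l * swap x y := by
  simp [starPerm]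

lemma starPerm_append (u v : List α) : starPerm x (u ++ v) = starPerm x v * starPerm x u := by
  simp [starPerm]

lemma starPerm_reverse (l : List α) : starPerm x l.reverse = (starPerm x l)⁻¹ := by
  induction l with
  | nil => simp [starPerm_nil]
  | cons y l ih => simp [starPerm_append, starPerm_cons, ih, starPerm_nil]

lemma starPerm_eq_formPerm (h : (x :: l).Nodup) : starPerm x l = (x :: l).formPerm := by
  induction l with
  | nil => simp [starPerm_nil]
  | cons y l ih =>
    have hxl : (x :: l).Nodup := h.sublist (by simp)
    calc starPerm x (y :: l)
        = (x :: l).formPerm * swap x y := by rw [starPerm_cons, ih hxl]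
      _ = (l ++ [x]).formPerm * swap x y := by
        rw [← List.formPerm_rotate_one _ hxl, List.rotate_cons_succ, List.rotate_zero]
      _ = (l ++ [x, y]).formPerm := (List.formPerm_append_pair l x y).symm
      _ = (x :: y :: l).formPerm := by
        rw [← List.formPerm_rotate _ h 2]
        simp [List.rotate_cons_succ]

lemma isCycle_starPerm (h : (x :: l).Nodup) (hl : l ≠ []) : (starPerm x l).IsCycle := by
  rw [starPerm_eq_formPerm h]
  exact List.isCycle_formPerm h (by simpa [Nat.succ_le_iff, List.length_pos_iff] using hl)

lemma support_starPerm [Fintype α] (h : (x :: l).Nodup) (hl : l ≠ []) :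
    (starPerm x l).support = (x :: l).toFinset := by
  rw [starPerm_eq_formPerm h]
  exact List.support_formPerm_of_nodup _ h (by simpa using hl)

lemma card_support_starPerm [Fintype α] (h : (x :: l).Nodup) (hl : l ≠ []) :
    (starPerm x l).support.card = l.length + 1 := by
  rw [support_starPerm h hl, List.toFinset_card_of_nodup h, List.length_cons]

lemma exists_perm_formPerm_eq_pow {n : ℕ} (h : (x :: l).Nodup) (hn : n.Coprime (l.length + 1)) :
    ∃ r : List α, r.Perm l ∧ (x :: r).formPerm = (x :: l).formPerm ^ n := by
  obtain ⟨r, hrl, hr⟩ := exists_perm_getElem_mul_mod x l hn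
  have hperm : (x :: r).Perm (x :: l) := hrl.cons x
  refine ⟨r, hrl, Equiv.ext fun y ↦ ?_⟩
  by_cases hy : y ∈ x :: r
  · obtain ⟨i, hi, rfl⟩ := List.getElem_of_mem hy
    rw [List.formPerm_apply_getElem _ (hperm.nodup_iff.2 h), hr, hr,
      List.formPerm_pow_apply_getElem _ h]
    congr 1
    simp [hrl.length_eq, Nat.mul_add]
  · have hyl : y ∉ x :: l := mt hperm.mem_iff.2 hy
    rw [List.formPerm_apply_of_notMem hy,
      Perm.pow_apply_eq_self_of_apply_eq_self (List.formPerm_apply_of_notMem hyl)]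

lemma exists_starPerm_mul_eq_of_even (u v w : List α) (hxm : (x :: m).Nodup)
    (hm : Even m.length) :
    ∃ p q : List α, p.Perm (u ++ m ++ w) ∧ q.Perm (m ++ v ++ w) ∧
      starPerm x q * starPerm x p = starPerm x (u ++ m ++ v) := by
  obtain ⟨r, hrm, hr⟩ := exists_perm_formPerm_eq_pow (n := 2) hxm
    (Nat.coprime_two_left.2 hm.add_one)
  rw [← starPerm_eq_formPerm hxm,
    ← starPerm_eq_formPerm ((hrm.cons x).nodup_iff.2 hxm)] at hr
  refine ⟨u ++ r ++ w, w.reverse ++ m.reverse ++ v, (hrm.append_left u).append_right w, ?_, ?_⟩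
  · rw [List.append_assoc]
    exact (w.reverse_perm.append (m.reverse_perm.append_right v)).trans List.perm_append_comm
  · simp only [starPerm_append, starPerm_reverse, hr]
    group

end StarPerm

lemma isPretransitive_closure_of_sameCycle {α : Type*} {s : Set (Perm α)} (x : α)
    (h : ∀ y, y ≠ x → ∃ p ∈ s, p.SameCycle x y) :
    MulAction.IsPretransitive (Subgroup.closure s) α := by
  refine (MulAction.isPretransitive_iff_base x).2 fun y ↦ ?_
  rcases eq_or_ne y x with rfl | hy
  · exact ⟨1, one_smul _ y⟩
  · obtain ⟨p, hp, k, hk⟩ := h y hy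
    exact ⟨⟨p ^ k, zpow_mem (Subgroup.subset_closure hp) k⟩, hk⟩

section Factorization

variable {α : Type*} [DecidableEq α] {x : α} {S : Finset α} {l : List α}

lemma exists_starPerm_mul_eq {a b : ℕ} (hx : x ∉ S) (hl : l.Nodup) (hlS : l.toFinset ⊆ S)
    (ha : a ≤ S.card) (hb : b ≤ S.card) (heven : Even (a + b + l.length))
    (hge : 2 * S.card ≤ a + b + l.length) :
    ∃ p q : List α, p.Nodup ∧ p.length = a ∧ q.Nodup ∧ q.length = b ∧
      p.toFinset ∪ q.toFinset = S ∧ starPerm x q * starPerm x p = starPerm x l := by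
  obtain ⟨u, m, v, rfl, hu, hv⟩ : ∃ u m v, l = u ++ m ++ v ∧
      u.length = S.card - b ∧ v.length = S.card - a :=
    exists_append_append_of_add_le_length (by omega)
  obtain ⟨w, hw, hwS⟩ := exists_nodup_append_toFinset_eq hl hlS
  have hcard : (u ++ m ++ v ++ w).length = S.card := by
    rw [← hwS, List.toFinset_card_of_nodup hw]
  simp only [List.length_append] at heven hge hcard
  have hxm : (x :: m).Nodup := by
    refine List.nodup_cons.2 ⟨fun h ↦ hx (hwS ▸ ?_), hw.sublist (by simp)⟩
    simp [h]
  obtain ⟨p, q, hp, hq, hqp⟩ := exists_starPerm_mul_eq_of_even u v w hxm (by grind)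
  refine ⟨p, q, hp.nodup_iff.2 (hw.sublist (by simp)), ?_, hq.nodup_iff.2 (hw.sublist (by simp)),
    ?_, ?_, hqp⟩
  · simp only [hp.length_eq, List.length_append]
    omega
  · simp only [hq.length_eq, List.length_append]
    omega
  · rw [← hwS, List.toFinset_eq_of_perm _ _ hp, List.toFinset_eq_of_perm _ _ hq]
    ext y
    simp only [Finset.mem_union, List.mem_toFinset, List.mem_append]
    tauto

/-- `N` stands for the total number of entries of the factors still to be found. The last three
conclusions allow the cycle of `q` to be factored further into these, inside `T`. -/
lemma exists_starPerm_mul_eq_with_remainder {a N : ℕ} (hx : x ∉ S) (hl : l.Nodup)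
    (hlS : l.toFinset ⊆ S) (ha : a ≤ S.card) (heven : Even (a + N + l.length))
    (hge : 2 * S.card ≤ a + N + l.length) :
    ∃ (p q : List α) (T : Finset α), p.Nodup ∧ p.length = a ∧ q.Nodup ∧ q.toFinset ⊆ T ∧
      p.toFinset ∪ T = S ∧ starPerm x q * starPerm x p = starPerm x l ∧
      min N S.card ≤ T.card ∧ Even (N + q.length) ∧ 2 * T.card ≤ N + q.length := by
  have hlen : l.length ≤ S.card := by
    rw [← List.toFinset_card_of_nodup hl]
    exact Finset.card_le_card hlS
  -- If the remaining factors can be glued into one cycle inside `S`, take `q` to have its length.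
  -- Otherwise take `q` as long as possible.
  rcases le_or_gt N S.card with hN | hN
  · obtain ⟨p, q, hp, hpa, hq, hqN, hpq, hmul⟩ :=
      exists_starPerm_mul_eq hx hl hlS ha hN heven hge
    have hcard := List.toFinset_card_of_nodup hq
    exact ⟨p, q, q.toFinset, hp, hpa, hq, subset_rfl, hpq, hmul, by omega, ⟨N, by omega⟩, by omega⟩
  · obtain ⟨T, hlT, hTS, hT⟩ := Finset.exists_subsuperset_card_eq (n := min (a + l.length) S.card)
      hlS (by rw [List.toFinset_card_of_nodup hl]; omega) (by omega)
    obtain ⟨b, hbT, hTb, hb⟩ : ∃ b ≤ T.card, T.card ≤ b + 1 ∧ Even (a + b + l.length) :=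
      ⟨T.card - (a + l.length + T.card) % 2, by omega, by omega, by rw [Nat.even_iff]; omega⟩
    obtain ⟨p, q, hp, hpa, hq, hqb, hpq, hmul⟩ :=
      exists_starPerm_mul_eq (fun h ↦ hx (hTS h)) hl hlT (by omega) hbT hb (by grind)
    refine ⟨p, q, S, hp, hpa, hq, ?_, ?_, hmul, by omega, by grind, by grind⟩
    · exact Finset.subset_union_right.trans (hpq.subset.trans hTS)
    · exact Finset.union_eq_right.2 (Finset.subset_union_left.trans (hpq.subset.trans hTS))

theorem exists_starPerm_prod_eq {n : ℕ} {f : Fin n → ℕ} (hx : x ∉ S) (hl : l.Nodup)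
    (hlS : l.toFinset ⊆ S) (hf : ∀ i, f i ≤ S.card) (heven : Even (∑ i, f i + l.length))
    (hge : 2 * S.card ≤ ∑ i, f i + l.length) :
    ∃ L : Fin n → List α, (∀ i, (L i).Nodup ∧ (L i).length = f i) ∧
      Finset.univ.biUnion (fun i ↦ (L i).toFinset) = S ∧
      (List.ofFn fun i ↦ starPerm x (L i)).reverse.prod = starPerm x l := by
  induction n generalizing S l with
  | zero =>
    have hcard := Finset.card_le_card hlS
    rw [List.toFinset_card_of_nodup hl] at hcard
    simp only [Finset.univ_eq_empty, Finset.sum_empty, zero_add] at hge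
    obtain rfl : S = ∅ := Finset.card_eq_zero.1 (by omega)
    obtain rfl : l = [] := List.length_eq_zero_iff.1 (by simpa using hcard)
    exact ⟨Fin.elim0, by simp [starPerm_nil]⟩
  | succ n ih =>
    rw [Fin.sum_univ_succ] at heven hge
    obtain ⟨p, q, T, hp, hpf, hq, hqT, hpT, hmul, hT, hTeven, hTge⟩ :=
      exists_starPerm_mul_eq_with_remainder hx hl hlS (hf 0) heven hge
    have hfT (i : Fin n) : f i.succ ≤ T.card :=
      (le_min (Finset.single_le_sum (f := fun i : Fin n ↦ f i.succ) (by simp) (Finset.mem_univ i))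
        (hf i.succ)).trans hT
    obtain ⟨L, hL, hLT, hprod⟩ :=
      ih (fun h ↦ hx (hpT ▸ Finset.mem_union_right _ h)) hq hqT hfT hTeven hTge
    refine ⟨Fin.cons p L, Fin.cases ⟨hp, hpf⟩ hL, ?_, ?_⟩
    · rw [← hpT, ← hLT]
      ext y
      simp [Fin.exists_fin_succ]
    · simp [hprod, hmul]

end Factorization

theorem admissible_tuple_realizable_general {α : Type*} [Fintype α] [DecidableEq α] (x : α)
    {n : ℕ} (e : Fin n → ℕ) (he : ∀ i, 2 ≤ e i ∧ e i ≤ Fintype.card α)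
    (heven : Even ((∑ i, e i) - n)) (hge : 2 * (Fintype.card α - 1) ≤ (∑ i, e i) - n) :
    ∃ σ : Fin n → Perm α,
      (∀ i, (σ i).IsCycle ∧ (σ i).support.card = e i) ∧
      (List.ofFn σ).reverse.prod = 1 ∧
      MulAction.IsPretransitive (Subgroup.closure (Set.range σ)) α ∧
      ∀ i, x ∈ (σ i).support := by
  have hsum : ∑ i, (e i - 1) = (∑ i, e i) - n := by
    rw [Finset.sum_tsub_distrib _ fun i _ ↦ (he i).1.trans' one_le_two]
    simp
  have hcard : (Finset.univ.erase x).card = Fintype.card α - 1 := by simp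
  obtain ⟨L, hL, hcover, hprod⟩ := exists_starPerm_prod_eq (x := x) (S := Finset.univ.erase x)
    (l := []) (f := fun i ↦ e i - 1) (by simp) List.nodup_nil (by simp)
    (fun i ↦ hcard ▸ Nat.sub_le_sub_right (he i).2 1) (by simpa [hsum] using heven)
    (by simpa [hsum] using hge)
  have hne (i) : L i ≠ [] := by
    have := he i
    rw [← List.length_pos_iff, (hL i).2]
    omega
  have hnodup (i) : (x :: L i).Nodup := by
    refine List.nodup_cons.2 ⟨fun h ↦ ?_, (hL i).1⟩
    have : x ∈ Finset.univ.erase x := hcover ▸ by simpa using ⟨i, h⟩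
    simp at this
  have hsupport (i) := support_starPerm (hnodup i) (hne i)
  have hcycle (i) := isCycle_starPerm (hnodup i) (hne i)
  refine ⟨fun i ↦ starPerm x (L i), fun i ↦ ⟨hcycle i, ?_⟩, hprod, ?_, fun i ↦ by simp [hsupport]⟩
  · have := he i
    rw [card_support_starPerm (hnodup i) (hne i), (hL i).2]
    omega
  · refine isPretransitive_closure_of_sameCycle x fun y hy ↦ ?_
    obtain ⟨i, hi⟩ : ∃ i, y ∈ L i := by
      have : y ∈ Finset.univ.biUnion fun i ↦ (L i).toFinset := by simp [hcover, hy]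
      simpa using this
    refine ⟨_, ⟨i, rfl⟩, (hcycle i).sameCycle ?_ ?_⟩ <;>
      rw [← Perm.mem_support, hsupport] <;> simp [hi]

/-- **Lemma (second basic lemma).** For any `(d,n)`-admissible tuple `e` (i.e. `2 ≤ e i ≤ d`
for all `i`, `∑ i, e i - n` is even and `∑ i, e i - n ≥ 2(d-1)`) there exist permutations
`σ 0, …, σ (n-1)` of `Fin d` such that each `σ i` is a cycle of length `e i`, the product
`σ (n-1) * ⋯ * σ 0` is the identity, the subgroup generated by the `σ i` acts transitively
on `Fin d`, and consecutive cycles `σ i`, `σ (i+1)` are not disjoint. -/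
theorem admissible_tuple_realizable (d n : ℕ) (hd : 2 ≤ d) (hn : 2 ≤ n)
    (e : Fin n → ℕ) (he : ∀ i, 2 ≤ e i ∧ e i ≤ d)
    (heven : Even ((∑ i, e i) - n)) (hge : 2 * (d - 1) ≤ (∑ i, e i) - n) :
    ∃ σ : Fin n → Equiv.Perm (Fin d),
      (∀ i, (σ i).IsCycle ∧ (σ i).support.card = e i) ∧
      ((List.ofFn σ).reverse).prod = 1 ∧
      (∀ a b : Fin d, ∃ τ ∈ Subgroup.closure (Set.range σ), τ a = b) ∧
      (∀ i : ℕ, ∀ h : i + 1 < n,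
        ((σ ⟨i, Nat.lt_of_succ_lt h⟩).support ∩ (σ ⟨i + 1, h⟩).support).Nonempty) := by
  obtain ⟨σ, hσ, hprod, htrans, hcommon⟩ := admissible_tuple_realizable_general
    (⟨0, by omega⟩ : Fin d) e (by simpa using he) heven (by simpa using hge)
  refine ⟨σ, hσ, hprod, fun a b ↦ ?_, fun i h ↦
    ⟨_, Finset.mem_inter.2 ⟨hcommon _, hcommon _⟩⟩⟩
  obtain ⟨τ, hτ⟩ := htrans.exists_smul_eq a b
  exact ⟨τ, τ.2, hτ⟩
end
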